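/- If H is a rank-two subgroup of a free group F_n of finite rank n ≥ 2 and R is a retract of F_n, then H ∩ R is a retract of H. -/

import Mathlib

/-- `R` is a retract of the ambient group: there is an endomorphism with image `R`
restricting to the identity on `R` (equivalently, an idempotent endomorphism with image `R`). -/
def IsRetract {G : Type*} [Group G] (R : Subgroup G) : Prop :=
  ∃ r : G →* G, r.range = R ∧ ∀ x ∈ R, r x = x

/-- The subgroup `H` is free of rank `m`. -/
def HasFreeRank {G : Type*} [Group G] (H : Subgroup G) (m : ℕ) : Prop :=
  ∃ φ : FreeGroup (Fin m) →* G, Function.Injective φ ∧ φ.range = H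

/-!
Write `H` as the image of an injective homomorphism `j : F₂ → F` and `R` as the image of an
idempotent endomorphism `r` of the free group `F`. Then `H ∩ R` corresponds to
`E = {a ∈ F₂ | r (j a) = j a}`, and it is to be shown that `E` is a retract of `F₂`; suppose
`E ≠ F₂`. Fix a prime `p` and compare `F₂` with the pro-`p` topology of `F`.

* Every homomorphism `Ψ` from `F₂` to a finite `p`-group is continuous for the topology induced by
  `j`. By induction along a central series it suffices to treat characters with values in `ℤ/p`.
  Since `j` is injective, `F₂` has a noncyclic finite `p`-quotient induced from `F`, hence two
  independent continuous characters, and in rank two these span all of them.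
* Replace `E` by the subgroup of those `a` for which `r (j a) = j a` modulo an open normal subgroup
  `M`. Its image `Δ` in a finite `p`-group stabilizes as `M` shrinks. A homomorphism from `R` to a
  nilpotent group extends to `F` along any given lift of a quotient, so, after coinduction from a
  subgroup of `p`-power index, the characters of `Δ` extend to `F₂`.
* If `Δ` were not cyclic, two independent characters of it would extend to a basis of the characters
  of `F₂`, so no nontrivial character would vanish on the elements fixed modulo a small `M`. But
  `r ∘ j ≠ j` provides such a character. Hence `Δ` is cyclic.

As `F` is residually a finite `p`-group, `E` is commutative, so `E = ⟨c⟩`; roots of elements of `E`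
lie in `E`, so `⟨c⟩` is the centralizer of `c`. Fox calculus then yields, for every `p`, a finite
`p`-quotient of `F₂` in which `c` is not a `p`-th power. There `c` generates the cyclic group `Δ`,
so some character of `F₂` modulo `p` is nontrivial on `c`. This being so for every `p`, there is
`τ : F₂ → ℤ` with `τ c = 1`, and `a ↦ c ^ τ a` is a retraction onto `E`.
-/

open commutatorElement MonoidAlgebra

/-- The subgroup `M` is an open normal subgroup for the pro-`p` topology: it is normal of finite
index and the quotient is a `p`-group. -/
structure IsPOpen (p : ℕ) {G : Type*} [Group G] (M : Subgroup G) : Prop where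
  normal : M.Normal
  finiteIndex : M.FiniteIndex
  pow_mem : ∀ x : G, ∃ k : ℕ, x ^ p ^ k ∈ M

namespace IsPOpen

variable {p : ℕ} {G G' : Type*} [Group G] [Group G'] {M N : Subgroup G}

theorem top : IsPOpen p (⊤ : Subgroup G) :=
  ⟨inferInstance, inferInstance, fun _ => ⟨0, trivial⟩⟩

theorem inf (hM : IsPOpen p M) (hN : IsPOpen p N) : IsPOpen p (M ⊓ N) := by
  have := hM.normal
  have := hN.normal
  have := hM.finiteIndex
  have := hN.finiteIndex
  refine ⟨inferInstance, inferInstance, fun x => ?_⟩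
  obtain ⟨k, hk⟩ := hM.pow_mem x
  obtain ⟨l, hl⟩ := hN.pow_mem x
  refine ⟨k + l, ?_, ?_⟩
  · rw [pow_add, pow_mul]
    exact M.pow_mem hk _
  · rw [add_comm, pow_add, pow_mul]
    exact N.pow_mem hl _

theorem ker {Q : Type*} [Group Q] [Finite Q] (hQ : IsPGroup p Q) (f : G →* Q) :
    IsPOpen p f.ker := by
  refine ⟨inferInstance, inferInstance, fun x => ?_⟩
  obtain ⟨k, hk⟩ := isPGroup_iff_pow_pow_eq_one.1 hQ (f x)
  exact ⟨k, by rw [MonoidHom.mem_ker, map_pow, hk]⟩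

theorem finite_quotient (hM : IsPOpen p M) : Finite (G ⧸ M) :=
  have := hM.finiteIndex
  inferInstance

theorem isPGroup_quotient (hM : IsPOpen p M) [M.Normal] : IsPGroup p (G ⧸ M) := by
  rw [isPGroup_iff_pow_pow_eq_one]
  intro g
  obtain ⟨x, rfl⟩ := QuotientGroup.mk_surjective g
  obtain ⟨k, hk⟩ := hM.pow_mem x
  exact ⟨k, by rwa [← QuotientGroup.mk_pow, QuotientGroup.eq_one_iff]⟩

theorem comap {M : Subgroup G'} (hM : IsPOpen p M) (f : G →* G') : IsPOpen p (M.comap f) := by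
  have := hM.normal
  have := hM.finite_quotient
  have h := ker hM.isPGroup_quotient ((QuotientGroup.mk' M).comp f)
  rwa [← MonoidHom.comap_ker, QuotientGroup.ker_mk'] at h

theorem exists_le_subgroupOf_le_ker (hM : IsPOpen p M) {U : Subgroup G} (hMU : M ≤ U)
    {Q : Type*} [Group Q] [Finite Q] (hQ : IsPGroup p Q) (g : U →* Q) :
    ∃ N ≤ M, IsPOpen p N ∧ N.subgroupOf U ≤ g.ker := by
  have := hM.normal
  have := hM.finiteIndex
  have : U.FiniteIndex := Subgroup.finiteIndex_of_le hMU
  have : (g.ker.map U.subtype).FiniteIndex := by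
    refine ⟨?_⟩
    rw [Subgroup.index_map_subtype]
    exact mul_ne_zero Subgroup.FiniteIndex.index_ne_zero Subgroup.FiniteIndex.index_ne_zero
  let K := g.ker.map U.subtype ⊓ M
  refine ⟨K.normalCore, K.normalCore_le.trans inf_le_right,
    ⟨inferInstance, inferInstance, fun x => ?_⟩, fun u hu => ?_⟩
  · obtain ⟨b, hb⟩ := isPGroup_iff_exists_pow_pow_eq_one.1 hQ
    obtain ⟨a, ha⟩ := hM.pow_mem x
    refine ⟨a + b, fun t => ?_⟩
    have hconj : t * x ^ p ^ a * t⁻¹ ∈ M := hM.normal.conj_mem _ ha t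
    rw [pow_add, pow_mul, ← conj_pow]
    refine ⟨⟨⟨_, hMU hconj⟩ ^ p ^ b, ?_, rfl⟩, M.pow_mem hconj _⟩
    exact (map_pow g _ _).trans (hb _)
  · obtain ⟨⟨v, hv, hvu⟩, -⟩ := K.normalCore_le hu
    obtain rfl : v = u := Subtype.ext hvu
    exact hv

theorem exists_forall_notMem {S : Finset G} (hS : ∀ s ∈ S, ∃ M : Subgroup G, IsPOpen p M ∧ s ∉ M) :
    ∃ M : Subgroup G, IsPOpen p M ∧ ∀ s ∈ S, s ∉ M := by
  classical
  induction S using Finset.induction_on with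
  | empty => exact ⟨⊤, top, by simp⟩
  | insert a S _ ih =>
    obtain ⟨M, hM, hMS⟩ := ih fun s hs => hS s (Finset.mem_insert_of_mem hs)
    obtain ⟨N, hN, haN⟩ := hS a (Finset.mem_insert_self _ _)
    refine ⟨M ⊓ N, hM.inf hN, fun s hs h => ?_⟩
    rcases Finset.mem_insert.1 hs with rfl | hs
    · exact haN h.2
    · exact hMS s hs h.1

end IsPOpen

theorem exists_monoidHom_comp_eq {F Q Q' : Type*} [Group F] [IsFreeGroup F] [Group Q] [Group Q']
    {π : Q →* Q'} (hπ : Function.Surjective π) (χ : F →* Q') : ∃ f : F →* Q, π.comp f = χ := by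
  choose l hl using fun x => hπ (χ (IsFreeGroup.of x))
  exact ⟨IsFreeGroup.lift l, IsFreeGroup.ext_hom fun x => by simp [hl]⟩

section Characters

variable {p : ℕ} [Fact p.Prime] {W : Type*} [Group W] [Finite W]

theorem exists_character_ne_one_of_ne_top (hW : IsPGroup p W) {B : Subgroup W} (hB : B ≠ ⊤) :
    ∃ μ : W →* Multiplicative (ZMod p), μ ≠ 1 ∧ B ≤ μ.ker := by
  obtain ⟨L, hL, hBL⟩ := (eq_top_or_exists_le_coatom B).resolve_left hB
  have := hW.isNilpotent
  have : L.Normal :=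
    Subgroup.NormalizerCondition.normal_of_coatom L Group.normalizerCondition_of_isNilpotent hL
  have : Nontrivial (W ⧸ L) := QuotientGroup.nontrivial_iff.2 hL.1
  have : IsSimpleGroup (W ⧸ L) := by
    refine ⟨fun K _ => ?_⟩
    have hLK : L ≤ K.comap (QuotientGroup.mk' L) := QuotientGroup.le_comap_mk' L K
    rw [← (Subgroup.comap_injective (QuotientGroup.mk'_surjective L)).eq_iff (b := ⊤),
      ← (Subgroup.comap_injective (QuotientGroup.mk'_surjective L)).eq_iff (b := ⊥),
      Subgroup.comap_top, MonoidHom.comap_bot, QuotientGroup.ker_mk']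
    exact (hL.le_iff.1 hLK).symm
  have hprime : (Nat.card (W ⧸ L)).Prime := CommGroup.is_simple_iff_prime_card.1 inferInstance
  have hcard : Nat.card (W ⧸ L) = p := ((Nat.prime_dvd_prime_iff_eq Fact.out hprime).1
    ((hW.to_quotient L).card_eq_or_dvd.resolve_left hprime.ne_one)).symm
  let e : W ⧸ L ≃* Multiplicative (ZMod p) := mulEquivOfPrimeCardEq (p := p) hcard (by simp)
  have hker : ((e : W ⧸ L →* Multiplicative (ZMod p)).comp (QuotientGroup.mk' L)).ker = L := by
    rw [MonoidHom.ker_mulEquiv_comp, QuotientGroup.ker_mk']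
  exact ⟨(e : W ⧸ L →* Multiplicative (ZMod p)).comp (QuotientGroup.mk' L),
    fun h => hL.1 (hker ▸ (MonoidHom.ker_eq_top_iff.2 h)), hker.symm ▸ hBL⟩

theorem exists_independent_characters (hW : IsPGroup p W) (hcyc : ¬ IsCyclic W) :
    ∃ (μ₁ μ₂ : W →* Multiplicative (ZMod p)) (w₁ w₂ : W),
      μ₁ w₁ ≠ 1 ∧ μ₂ w₁ = 1 ∧ μ₂ w₂ ≠ 1 := by
  rw [isCyclic_iff_exists_zpowers_eq_top, not_exists] at hcyc
  obtain ⟨μ₁, h₁, -⟩ := exists_character_ne_one_of_ne_top hW (hcyc 1)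
  obtain ⟨w₁, hw₁⟩ := DFunLike.exists_ne h₁
  obtain ⟨μ₂, h₂, h₂'⟩ := exists_character_ne_one_of_ne_top hW (hcyc w₁)
  obtain ⟨w₂, hw₂⟩ := DFunLike.exists_ne h₂
  exact ⟨μ₁, μ₂, w₁, w₂, hw₁, h₂' (Subgroup.mem_zpowers w₁), hw₂⟩

theorem exists_character_ne_one_of_zpowers_eq_top [Nontrivial W] (hW : IsPGroup p W) {d : W}
    (hd : Subgroup.zpowers d = ⊤) : ∃ μ : W →* Multiplicative (ZMod p), μ d ≠ 1 := by
  obtain ⟨μ, hμ, -⟩ := exists_character_ne_one_of_ne_top hW (B := ⊥) bot_ne_top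
  refine ⟨μ, fun h => hμ (MonoidHom.ker_eq_top_iff.1 (top_le_iff.1 ?_))⟩
  rw [← hd, Subgroup.zpowers_le]
  exact h

theorem exists_character_ne_one_of_forall_pow_ne [IsCyclic W] (hW : IsPGroup p W) {w : W}
    (hw : ∀ y : W, y ^ p ≠ w) : ∃ μ : W →* Multiplicative (ZMod p), μ w ≠ 1 := by
  obtain ⟨d, hd⟩ := isCyclic_iff_exists_zpowers_eq_top.1 ‹IsCyclic W›
  obtain ⟨i, rfl⟩ : w ∈ Subgroup.zpowers d := hd ▸ Subgroup.mem_top w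
  have hi : ¬ (p : ℤ) ∣ i := by
    rintro ⟨k, rfl⟩
    exact hw (d ^ k) (by rw [← zpow_natCast, ← zpow_mul, mul_comm])
  have : Nontrivial W := ⟨1, d ^ i, fun h => hw 1 (by rw [one_pow]; exact h)⟩
  obtain ⟨μ, hμ⟩ := exists_character_ne_one_of_zpowers_eq_top hW hd
  refine ⟨μ, fun h => hi ?_⟩
  have hp : p ∣ orderOf (μ d) := (ZModModule.isPGroup_multiplicative (n := p)).dvd_orderOf hμ
  exact (Int.natCast_dvd_natCast.2 hp).trans
    (orderOf_dvd_iff_zpow_eq_one.2 (by rw [← map_zpow, h]))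

end Characters

theorem card_le_of_triangular_characters {p : ℕ} [Fact p.Prime] {X : Type*} [Fintype X] {m : ℕ}
    (χ : Fin m → FreeGroup X →* Multiplicative (ZMod p)) (y : Fin m → FreeGroup X)
    (hdiag : ∀ i, χ i (y i) ≠ 1) (hlower : ∀ i j, j < i → χ i (y j) = 1) :
    m ≤ Fintype.card X := by
  suffices hli : LinearIndependent (ZMod p) fun i x => (χ i (FreeGroup.of x)).toAdd by
    simpa using hli.fintype_card_le_finrank
  refine Fintype.linearIndependent_iff.2 fun f hf => ?_
  have hrel (g : FreeGroup X) : ∑ i, f i * (χ i g).toAdd = 0 := by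
    induction g using FreeGroup.induction_on with
    | C1 => simp
    | of x => simpa using congrFun hf x
    | inv_of x h => simpa using h
    | mul a b ha hb => simp [mul_add, Finset.sum_add_distrib, ha, hb]
  intro i
  induction i using WellFoundedLT.induction with | _ i ih
  have hi := hrel (y i)
  rw [Finset.sum_eq_single i] at hi
  · exact (mul_eq_zero.1 hi).resolve_right (toAdd_eq_zero.not.2 (hdiag i))
  · intro l _ hl
    rcases hl.lt_or_gt with hl | hl
    · rw [ih l hl, zero_mul]
    · rw [hlower l i hl, toAdd_one, mul_zero]
  · simp

/-! ### Fox calculus -/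

section Derivations

variable {k G Q M : Type*} [CommRing k] [Group G] [Group Q] [AddCommGroup M]

/-- The linear action of a group on a module over its group algebra, on the multiplicative copy of
the module so that semidirect products can be formed. -/
noncomputable def groupAlgebraAction (k Q M : Type*) [CommRing k] [Group Q] [AddCommGroup M]
    [Module k[Q] M] : Q →* MulAut (Multiplicative M) :=
  (MulAutMultiplicative M).symm.toMonoidHom.comp
    ((DistribMulAction.toAddAut k[Q]ˣ M).comp (MonoidAlgebra.of k Q).toHomUnits)

theorem groupAlgebraAction_apply [Module k[Q] M] (g : Q) (m : Multiplicative M) :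
    groupAlgebraAction k Q M g m = .ofAdd ((single g 1 : k[Q]) • m.toAdd) :=
  rfl

/-- The homomorphism to a semidirect product encoding a derivation with values in a module over
the group algebra of a quotient. -/
noncomputable def derivationHom [Module k[Q] M] (q : G →* Q) (D : G → M)
    (hD : ∀ g h, D (g * h) = D g + (single (q g) 1 : k[Q]) • D h) :
    G →* Multiplicative M ⋊[groupAlgebraAction k Q M] Q :=
  MonoidHom.mk' (fun g => ⟨.ofAdd (D g), q g⟩) fun g h => by
    ext
    · rw [SemidirectProduct.mul_left, hD, ofAdd_add, groupAlgebraAction_apply, toAdd_ofAdd]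
    · rw [SemidirectProduct.mul_right, map_mul]

theorem derivation_ext {X : Type*} [Module k[FreeGroup X] M] {D D' : FreeGroup X → M}
    (hD : ∀ g h, D (g * h) = D g + (single g 1 : k[FreeGroup X]) • D h)
    (hD' : ∀ g h, D' (g * h) = D' g + (single g 1 : k[FreeGroup X]) • D' h)
    (h : ∀ x, D (FreeGroup.of x) = D' (FreeGroup.of x)) (g : FreeGroup X) : D g = D' g := by
  have hom_eq : derivationHom (.id _) D hD = derivationHom (.id _) D' hD' :=
    FreeGroup.ext_hom _ _ fun x => SemidirectProduct.ext (congrArg Multiplicative.ofAdd (h x)) rfl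
  exact congrArg (fun y => y.left.toAdd) (DFunLike.congr_fun hom_eq g)

end Derivations

section Fox

variable (k : Type*) {X : Type*} [CommRing k]

/-- The vector of Fox derivatives of `g`: the derivation of the free group which maps the
generators to a basis. -/
noncomputable def foxDerivative (g : FreeGroup X) : X →₀ k[FreeGroup X] :=
  (FreeGroup.lift (fun x => (⟨.ofAdd (.single x 1), .of x⟩ :
    Multiplicative (X →₀ k[FreeGroup X]) ⋊[groupAlgebraAction k _ _] FreeGroup X)) g).left.toAdd

theorem foxDerivative_of (x : X) : foxDerivative k (FreeGroup.of x) = .single x 1 := by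
  rw [foxDerivative, FreeGroup.lift_apply_of, toAdd_ofAdd]

theorem foxDerivative_mul (g h : FreeGroup X) :
    foxDerivative k (g * h) =
      foxDerivative k g + (single g 1 : k[FreeGroup X]) • foxDerivative k h := by
  have hright : SemidirectProduct.rightHom.comp (FreeGroup.lift fun x => (⟨.ofAdd (.single x 1),
      .of x⟩ : Multiplicative (X →₀ k[FreeGroup X]) ⋊[groupAlgebraAction k _ _] FreeGroup X)) =
      .id _ := FreeGroup.ext_hom _ _ fun x => by simp
  have := DFunLike.congr_fun hright g
  rw [foxDerivative, map_mul, SemidirectProduct.mul_left, toAdd_mul, groupAlgebraAction_apply]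
  rw [MonoidHom.comp_apply, SemidirectProduct.rightHom_eq_right] at this
  rw [this]
  rfl

theorem linearCombination_foxDerivative (g : FreeGroup X) :
    Finsupp.linearCombination k[FreeGroup X]
      (fun x => (single (FreeGroup.of x) 1 - 1 : k[FreeGroup X])) (foxDerivative k g) =
        single g 1 - 1 := by
  refine derivation_ext (k := k) (D := fun g => Finsupp.linearCombination _ _ _)
    (D' := fun g => single g 1 - 1) (fun g h => ?_) (fun g h => ?_) (fun x => ?_) g
  · rw [foxDerivative_mul, map_add, map_smul]
  · rw [smul_eq_mul, mul_sub, single_mul_single, one_mul, mul_one]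
    abel
  · rw [foxDerivative_of, Finsupp.linearCombination_single, one_smul]

theorem linearCombination_mapDomain_foxDerivative {Q : Type*} [Group Q] (q : FreeGroup X →* Q)
    (g : FreeGroup X) :
    Finsupp.linearCombination k[Q] (fun x => (single (q (FreeGroup.of x)) 1 - 1 : k[Q]))
      ((foxDerivative k g).mapRange (mapDomain q) (mapDomain_zero q)) = single (q g) 1 - 1 := by
  have h := congrArg (mapDomainRingHom k q) (linearCombination_foxDerivative k g)
  rw [Finsupp.linearCombination_apply, map_finsuppSum] at h
  refine (Finsupp.sum_mapRange_index
    (h := fun x a => a • (single (q (FreeGroup.of x)) 1 - 1 : k[Q]))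
    fun _ => zero_smul _ _).trans ?_
  simpa only [smul_eq_mul, map_mul, map_sub, map_one, mapDomainRingHom_apply,
    mapDomain_single] using h

/-- The affine representation over the group algebra of a quotient of a free group whose
translation part is the Fox derivative with respect to the generator `x`. -/
noncomputable def foxHom {Q : Type*} [Group Q] (q : FreeGroup X →* Q) (x : X) :
    FreeGroup X →* Multiplicative k[Q] ⋊[groupAlgebraAction k Q k[Q]] Q :=
  derivationHom q (fun g => mapDomain q (foxDerivative k g x)) fun g h => by
    rw [foxDerivative_mul, Finsupp.add_apply, Finsupp.smul_apply, smul_eq_mul, smul_eq_mul,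
      mapDomain_add, mapDomain_mul, mapDomain_single]

variable {Q : Type*} [Group Q] (q : FreeGroup X →* Q) (x : X) (g : FreeGroup X)

theorem foxHom_left : (foxHom k q x g).left = .ofAdd (mapDomain q (foxDerivative k g x)) :=
  rfl

theorem foxHom_right : (foxHom k q x g).right = q g :=
  rfl

end Fox

section Cosets

variable {k G X : Type*} [CommRing k] [Group G] {C : Subgroup G}

theorem exists_function_extending_character (χ : C →* Multiplicative k) :
    ∃ τ : G → k, ∀ (γ : C) (y : G), τ (γ * y) = (χ γ).toAdd + τ y := by
  obtain ⟨T, hT, -⟩ := C.exists_isComplement_right 1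
  refine ⟨fun y => (χ (hT.equiv y).1).toAdd, fun γ y => ?_⟩
  beta_reduce
  rw [hT.equiv_mul_left, map_mul, toAdd_mul]

theorem liftNC_mul_single_sub_one {τ : G → k} {g : G}
    {δ : Quotient (QuotientGroup.rightRel C) → k} (hδ : ∀ y, τ (y * g) - τ y = δ ⟦y⟧) (f : k[G]) :
    liftNC (.id k) τ (f * (single g 1 - 1)) =
      liftNC (.id k) δ (mapDomain (Quotient.mk (QuotientGroup.rightRel C)) f) := by
  induction f using MonoidAlgebra.induction_linear with
  | zero => simp
  | add f f' hf hf' => rw [add_mul, map_add, hf, hf', mapDomain_add, map_add]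
  | single y a =>
    rw [mul_sub, single_mul_single, mul_one, mul_one, map_sub, mapDomain_single, liftNC_single,
      liftNC_single, liftNC_single, ← hδ, mul_sub]

-- Pairing with a function `τ` that transforms on the left by `χ` turns `c - 1` into `χ c`, whereas
-- a multiple of `g x - 1` is paired through its image on cosets, as `τ (y * g x) - τ y` only
-- depends on the coset of `y`.
theorem character_eq_one_of_mapDomain_rightRel_eq_zero (χ : C →* Multiplicative k) (c : C)
    (g : X → G) (D : X →₀ k[G])
    (hD : Finsupp.linearCombination k[G] (fun x => (single (g x) 1 - 1 : k[G])) D =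
      single (c : G) 1 - 1)
    (hzero : ∀ x, mapDomain (Quotient.mk (QuotientGroup.rightRel C)) (D x) = 0) : χ c = 1 := by
  obtain ⟨τ, hτ⟩ := exists_function_extending_character χ
  have hdiff (x : X) : ∀ y z : G, (QuotientGroup.rightRel C) y z →
      τ (y * g x) - τ y = τ (z * g x) - τ z := by
    intro y z hyz
    obtain ⟨γ, rfl⟩ := hyz
    change τ (γ * z * g x) - τ (γ * z) = _
    rw [mul_assoc, hτ, hτ, add_sub_add_left_eq_sub]
  have hvanish : liftNC (.id k) τ (single (c : G) 1 - 1) = 0 := by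
    rw [← hD, Finsupp.linearCombination_apply, Finsupp.sum, map_sum]
    refine Finset.sum_eq_zero fun x _ => ?_
    rw [smul_eq_mul, liftNC_mul_single_sub_one (δ := Quotient.lift _ (hdiff x)) (fun _ => rfl),
      hzero, map_zero]
  rw [one_def, map_sub, liftNC_single, liftNC_single, AddMonoidHom.id_apply, one_mul, one_mul,
    ← mul_one (c : G), hτ, add_sub_cancel_right] at hvanish
  exact toAdd_eq_zero.1 hvanish

end Cosets

theorem mapDomain_eq_zero_of_factorsThrough {α β γ M : Type*} [AddCommMonoid M] {q : α → β}
    {q' : α → γ} {f : α →₀ M} (hf : Finsupp.mapDomain q f = 0)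
    (hq : ∀ y ∈ f.support, ∀ z ∈ f.support, q y = q z → q' y = q' z) :
    Finsupp.mapDomain q' f = 0 := by
  rcases f.support.eq_empty_or_nonempty with hempty | ⟨y₀, -⟩
  · rw [Finsupp.support_eq_empty.1 hempty, Finsupp.mapDomain_zero]
  have hfactor : Function.FactorsThrough (fun y : f.support => q' y) (fun y => q y) :=
    fun y z => hq y y.2 z z.2
  let h : β → γ := Function.extend (fun y : f.support => q y) (fun y => q' y) fun _ => q' y₀
  have hcongr : Finsupp.mapDomain q' f = Finsupp.mapDomain (h ∘ q) f :=
    Finsupp.mapDomain_congr fun y hy =>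
      (hfactor.extend_apply (fun _ => q' y₀) ⟨y, hy⟩).symm
  rw [hcongr, Finsupp.mapDomain_comp, hf, Finsupp.mapDomain_zero]

/-! ### Free groups are residually finite `p`-groups -/

instance {N Q : Type*} [Group N] [Group Q] {φ : Q →* MulAut N} [Finite N] [Finite Q] :
    Finite (N ⋊[φ] Q) :=
  Finite.of_equiv _ SemidirectProduct.equivProd.symm

instance {k Q : Type*} [CommRing k] [Finite k] [Finite Q] : Finite k[Q] :=
  Finite.of_equiv _ (coeffEquiv.trans Finsupp.equivFunOnFinite).symm

theorem isPGroup_semidirectProduct {p : ℕ} {N Q : Type*} [Group N] [Group Q] {φ : Q →* MulAut N}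
    (hN : IsPGroup p N) (hQ : IsPGroup p Q) : IsPGroup p (N ⋊[φ] Q) := by
  have hker : IsPGroup p (SemidirectProduct.rightHom : N ⋊[φ] Q →* Q).ker := by
    rw [← SemidirectProduct.range_inl_eq_ker_rightHom]
    exact hN.of_surjective _ (SemidirectProduct.inl (φ := φ)).rangeRestrict_surjective
  have := (hQ.to_subgroup ⊤).comap_of_ker_isPGroup _ hker
  rw [Subgroup.comap_top] at this
  exact this.of_equiv Subgroup.topEquiv

section ResiduallyP

variable {p : ℕ} [Fact p.Prime]

theorem mapDomain_foxDerivative_eq_zero_of_forall_mem {X : Type*} {c : FreeGroup X}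
    (hc : ∀ M : Subgroup (FreeGroup X), IsPOpen p M → c ∈ M) (x : X) :
    mapDomain (Quotient.mk (QuotientGroup.rightRel (sInf {M | IsPOpen p M})))
      (foxDerivative (ZMod p) c x) = 0 := by
  classical
  set K : Subgroup (FreeGroup X) := sInf {M | IsPOpen p M}
  let S := (foxDerivative (ZMod p) c x).coeff.support
  obtain ⟨M, hM, hMS⟩ := IsPOpen.exists_forall_notMem (p := p)
    (S := ((S ×ˢ S).image fun s => s.2 * s.1⁻¹).filter (· ∉ K)) fun s hs => by
      simpa [K, Subgroup.mem_sInf] using (Finset.mem_filter.1 hs).2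
  have := hM.normal
  have := hM.finite_quotient
  have hfox : foxHom (ZMod p) (QuotientGroup.mk' M) x c = 1 := hc _ <| .ker
    (isPGroup_semidirectProduct ZModModule.isPGroup_multiplicative hM.isPGroup_quotient) _
  have hquot : mapDomain (QuotientGroup.mk' M) (foxDerivative (ZMod p) c x) = 0 :=
    congrArg (fun t => t.left.toAdd) hfox
  refine congrArg ofCoeff
    (mapDomain_eq_zero_of_factorsThrough (congrArg coeff hquot) fun y hy z hz hyz => ?_)
  refine Quotient.sound (QuotientGroup.rightRel_apply.2 ?_)
  by_contra hnot
  refine hMS _ (Finset.mem_filter.2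
    ⟨Finset.mem_image.2 ⟨(y, z), Finset.mk_mem_product hy hz, rfl⟩, hnot⟩) ?_
  rw [← QuotientGroup.eq_one_iff, ← QuotientGroup.mk'_apply, map_mul, map_inv, hyz,
    mul_inv_cancel]

theorem exists_character_apply_ne_one (p : ℕ) [Fact p.Prime] (K : Type*) [Group K] [IsFreeGroup K]
    [Nontrivial K] : ∃ (χ : K →* Multiplicative (ZMod p)) (c : K), χ c ≠ 1 := by
  by_contra! htriv
  have hone : (MonoidHom.id K) = 1 := IsFreeGroup.ext_hom fun x => by
    have := htriv (IsFreeGroup.lift fun _ => .ofAdd 1) (IsFreeGroup.of x)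
    rw [IsFreeGroup.lift_of] at this
    exact absurd this (by simp)
  obtain ⟨w, hw⟩ := exists_ne (1 : K)
  exact hw (DFunLike.congr_fun hone w)

theorem eq_one_of_forall_isPOpen_mem {X : Type*} {w : FreeGroup X}
    (hw : ∀ M : Subgroup (FreeGroup X), IsPOpen p M → w ∈ M) : w = 1 := by
  by_contra hne
  set K : Subgroup (FreeGroup X) := sInf {M | IsPOpen p M}
  have : Nontrivial K :=
    ⟨⟨w, Subgroup.mem_sInf.2 hw⟩, 1, fun h => hne (congrArg Subtype.val h)⟩
  have : IsFreeGroup K := subgroupIsFreeOfIsFree K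
  obtain ⟨χ, c, hc⟩ := exists_character_apply_ne_one p K
  exact hc <| character_eq_one_of_mapDomain_rightRel_eq_zero χ c _ _
    (linearCombination_foxDerivative (ZMod p) (c : FreeGroup X))
    (mapDomain_foxDerivative_eq_zero_of_forall_mem (Subgroup.mem_sInf.1 c.2))

theorem exists_isPOpen_notMem (p : ℕ) [Fact p.Prime] {F : Type*} [Group F] [IsFreeGroup F] {w : F}
    (hw : w ≠ 1) : ∃ M : Subgroup F, IsPOpen p M ∧ w ∉ M := by
  have hw' : IsFreeGroup.toFreeGroup F w ≠ 1 := (map_ne_one_iff _ (MulEquiv.injective _)).2 hw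
  contrapose! hw'
  exact eq_one_of_forall_isPOpen_mem (p := p) fun M hM =>
    hw' _ (hM.comap (IsFreeGroup.toFreeGroup F).toMonoidHom)

theorem exists_isPOpen_forall_mem_imp_eq_one (p : ℕ) [Fact p.Prime] {F : Type*} [Group F]
    [IsFreeGroup F] (S : Finset F) :
    ∃ M : Subgroup F, IsPOpen p M ∧ ∀ s ∈ S, s ∈ M → s = 1 := by
  classical
  obtain ⟨M, hM, hMS⟩ := IsPOpen.exists_forall_notMem (S := S.erase 1) fun s hs =>
    exists_isPOpen_notMem p (Finset.ne_of_mem_erase hs)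
  exact ⟨M, hM, fun s hs hsM => by_contra fun hne => hMS s (Finset.mem_erase.2 ⟨hne, hs⟩) hsM⟩

end ResiduallyP

/-! ### Elements that are not `p`-th powers in a finite `p`-quotient -/

section CyclicSums

variable {k G X : Type*} [CommRing k] [Group G]

theorem coeff_sum_single_pow_mul {g : G} (hg : IsOfFinOrder g) (f : k[G]) (y : G) :
    (∑ i ∈ Finset.range (orderOf g), single (g ^ i) 1 * f).coeff y =
      (mapDomain (Quotient.mk (QuotientGroup.rightRel (Subgroup.zpowers g))) f).coeff ⟦y⟧ := by
  classical
  induction f using MonoidAlgebra.induction_linear with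
  | zero => simp
  | add f f' hf hf' =>
    simp only [mul_add, Finset.sum_add_distrib, mapDomain_add, coeff_add, Finsupp.add_apply, hf,
      hf']
  | single z a =>
    simp only [single_mul_single, one_mul, mapDomain_single, coeff_sum, Finsupp.finsetSum_apply,
      coeff_single, Finsupp.single_apply, Quotient.eq, QuotientGroup.rightRel_apply]
    by_cases hyz : y * z⁻¹ ∈ Subgroup.zpowers g
    · obtain ⟨i, hi, hiy⟩ := Finset.mem_image.1 (hg.mem_zpowers_iff_mem_range_orderOf.1 hyz)
      rw [if_pos hyz, Finset.sum_eq_single_of_mem i hi fun j hj hji => if_neg fun hjy => hji ?_,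
        if_pos (by rw [hiy, inv_mul_cancel_right])]
      refine pow_injOn_Iio_orderOf (Finset.mem_range.1 hj) (Finset.mem_range.1 hi) ?_
      exact (eq_mul_inv_of_mul_eq hjy).trans hiy.symm
    · rw [if_neg hyz]
      refine Finset.sum_eq_zero fun i _ => if_neg fun hi => hyz ?_
      rw [← hi, mul_inv_cancel_right]
      exact Subgroup.npow_mem_zpowers g i

theorem exists_sum_single_pow_mul_ne_zero {p : ℕ} [Fact p.Prime] [Finite G] (hG : IsPGroup p G)
    {c : G} (hc : c ≠ 1) (g : X → G) (D : X →₀ (ZMod p)[G])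
    (hD : Finsupp.linearCombination (ZMod p)[G] (fun x => (single (g x) 1 - 1 : (ZMod p)[G])) D =
      single c 1 - 1) :
    ∃ x, ∑ i ∈ Finset.range (orderOf c), single (c ^ i) 1 * D x ≠ 0 := by
  by_contra! hzero
  let d : Subgroup.zpowers c := ⟨c, Subgroup.mem_zpowers c⟩
  have : Nontrivial (Subgroup.zpowers c) := ⟨d, 1, fun h => hc (congrArg Subtype.val h)⟩
  obtain ⟨μ, hμ⟩ := exists_character_ne_one_of_zpowers_eq_top (hG.to_subgroup _)
    (d := d) (eq_top_iff.2 fun ⟨_, i, hi⟩ _ => ⟨i, Subtype.ext hi⟩)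
  refine hμ (character_eq_one_of_mapDomain_rightRel_eq_zero μ d g D hD fun x => ?_)
  ext y
  obtain ⟨y, rfl⟩ := Quotient.mk_surjective y
  rw [← coeff_sum_single_pow_mul (isOfFinOrder_of_finite c), hzero]
  rfl

theorem exists_eq_mul_map_mul_of_single_mul_eq {F : Type*} [Group F] (q : F →* G) (f : k[F])
    {c e : G} (hne : ∑ i ∈ Finset.range (orderOf c), single (c ^ i) 1 * mapDomain q f ≠ 0)
    (he : single e 1 * ∑ i ∈ Finset.range (orderOf c), single (c ^ i) 1 * mapDomain q f =
      ∑ i ∈ Finset.range (orderOf c), single (c ^ i) 1 * mapDomain q f) :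
    ∃ s ∈ f.coeff.support, ∃ s' ∈ f.coeff.support, ∃ i j : ℕ,
      e = c ^ i * q (s' * s⁻¹) * (c ^ j)⁻¹ := by
  classical
  set θ := ∑ i ∈ Finset.range (orderOf c), single (c ^ i) 1 * mapDomain q f with hθ
  have hsupp (t : G) (ht : θ.coeff t ≠ 0) : ∃ s ∈ f.coeff.support, ∃ i : ℕ, t = c ^ i * q s := by
    rw [hθ, coeff_sum, Finsupp.finsetSum_apply] at ht
    obtain ⟨i, -, hi⟩ := Finset.exists_ne_zero_of_sum_ne_zero ht
    rw [coeff_single_mul_apply, one_mul] at hi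
    obtain ⟨s, hs, hst⟩ := Finset.mem_image.1
      (Finsupp.mapDomain_support (Finsupp.mem_support_iff.2 hi))
    exact ⟨s, hs, i, by rw [hst, mul_inv_cancel_left]⟩
  obtain ⟨t, ht⟩ := Finsupp.ne_iff.1 (coeff_eq_zero.not.2 hne)
  have ht' : θ.coeff (e * t) ≠ 0 := by
    rwa [← he, coeff_single_mul_apply, one_mul, inv_mul_cancel_left]
  obtain ⟨s, hs, j, rfl⟩ := hsupp t ht
  obtain ⟨s', hs', i, hi⟩ := hsupp _ ht'
  refine ⟨s, hs, s', hs', i, j, ?_⟩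
  rw [map_mul, map_inv, ← mul_assoc, ← hi]
  group

end CyclicSums

section NotPthPower

-- The sum is the translation part of `w ^ n`, where `n` is the order of the linear part of `w`. As
-- `w ^ n` is a translation commuting with `y`, the linear part of `y` fixes it.
theorem single_mul_sum_eq_of_commute {k G : Type*} [CommRing k] [Group G]
    {y w : Multiplicative k[G] ⋊[groupAlgebraAction k G k[G]] G} (h : Commute y w) :
    single y.right 1 * ∑ i ∈ Finset.range (orderOf w.right), single (w.right ^ i) 1 * w.left.toAdd =
      ∑ i ∈ Finset.range (orderOf w.right), single (w.right ^ i) 1 * w.left.toAdd := by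
  have hright (n : ℕ) : (w ^ n).right = w.right ^ n := map_pow SemidirectProduct.rightHom w n
  have hpow (n : ℕ) : (w ^ n).left.toAdd =
      ∑ i ∈ Finset.range n, single (w.right ^ i) 1 * w.left.toAdd := by
    induction n with
    | zero => simp
    | succ n ih =>
      rw [pow_succ, SemidirectProduct.mul_left, toAdd_mul, ih, Finset.sum_range_succ, hright]
      rfl
  have hleft := congrArg (fun t => t.left.toAdd) (h.pow_right (orderOf w.right)).eq
  simp only [SemidirectProduct.mul_left, toAdd_mul, hright, pow_orderOf_eq_one, map_one,
    MulAut.one_apply, groupAlgebraAction_apply, toAdd_ofAdd, hpow, smul_eq_mul] at hleft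
  exact add_left_cancel (hleft.trans (add_comm _ _))

theorem pow_eq_one_of_map_mem_zpowers {p : ℕ} [Fact p.Prime] {A Q : Type*} [Group A] [Group Q]
    (hA : IsPGroup p A) (π : A →* Q) (hπ : ∀ z ∈ π.ker, z ^ p = 1) {y : A}
    (hy : π y ∈ Subgroup.zpowers (π (y ^ p))) : y ^ p = 1 := by
  obtain ⟨m, hm⟩ := hy
  have hker : y * (y ^ p) ^ (-m) ∈ π.ker := by
    rw [MonoidHom.mem_ker, map_mul, map_zpow, zpow_neg, mul_inv_eq_one, ← hm]
  have hone : (y ^ p) ^ (1 - m * p) = 1 := by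
    have h := hπ _ hker
    rw [(((Commute.refl y).pow_right p).zpow_right (-m)).mul_pow] at h
    rw [← h, sub_eq_neg_add, zpow_add_one, ← neg_mul, zpow_mul, zpow_natCast]
    exact (((Commute.refl _).zpow_right (-m)).pow_right p).eq.symm
  by_contra hne
  have hdvd : (p : ℤ) ∣ 1 - m * p := (Int.natCast_dvd_natCast.2 (hA.dvd_orderOf hne)).trans
    (orderOf_dvd_iff_zpow_eq_one.2 hone)
  have hp1 : (p : ℤ) ∣ 1 := (Int.dvd_iff_dvd_of_dvd_sub hdvd).2 (Dvd.intro_left _ rfl)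
  exact (Fact.out : p.Prime).not_dvd_one (by exact_mod_cast hp1)

-- A `p`-th root of the image of `c` commutes with it. Comparing supports in the invariant of
-- `single_mul_sum_eq_of_commute` then puts the linear part of the root into the powers of `q c`.
theorem foxHom_pow_ne {p : ℕ} [Fact p.Prime] {X Q : Type*} [Group Q] (hQ : IsPGroup p Q)
    (q : FreeGroup X →* Q) {x : X} {c : FreeGroup X} (hqc : q c ≠ 1)
    (hx : ∑ i ∈ Finset.range (orderOf (q c)),
      single (q c ^ i) 1 * mapDomain q (foxDerivative (ZMod p) c x) ≠ 0)
    (hcomm : ∀ s ∈ (foxDerivative (ZMod p) c x).coeff.support,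
      ∀ s' ∈ (foxDerivative (ZMod p) c x).coeff.support,
        Commute (q (s' * s⁻¹)) (q c) → s' * s⁻¹ ∈ Subgroup.zpowers c) (y : FreeGroup X) :
    foxHom (ZMod p) q x y ^ p ≠ foxHom (ZMod p) q x c := by
  intro hpow
  have hyc : Commute (foxHom (ZMod p) q x y) (foxHom (ZMod p) q x c) :=
    hpow ▸ Commute.self_pow _ p
  have hqyc : Commute (q y) (q c) := congrArg SemidirectProduct.right hyc.eq
  have hfix := single_mul_sum_eq_of_commute hyc
  simp only [foxHom_left, foxHom_right, toAdd_ofAdd] at hfix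
  obtain ⟨s, hs, s', hs', i, j, hij⟩ := exists_eq_mul_map_mul_of_single_mul_eq q _ hx hfix
  have hss : Commute (q (s' * s⁻¹)) (q c) := by
    have heq : q (s' * s⁻¹) = (q c ^ i)⁻¹ * q y * q c ^ j := by
      rw [hij]
      group
    rw [heq]
    exact ((Commute.pow_self _ i).inv_left.mul_left hqyc).mul_left (Commute.pow_self _ j)
  obtain ⟨m, hm⟩ := hcomm s hs s' hs' hss
  have hqy : q y ∈ Subgroup.zpowers (q c) := by
    rw [hij, ← hm, map_zpow]
    exact mul_mem (mul_mem (Subgroup.npow_mem_zpowers _ i) (Subgroup.zpow_mem_zpowers _ m))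
      (inv_mem (Subgroup.npow_mem_zpowers _ j))
  have hker : ∀ z ∈ (SemidirectProduct.rightHom : Multiplicative (ZMod p)[Q] ⋊[groupAlgebraAction
      (ZMod p) Q _] Q →* Q).ker, z ^ p = 1 := by
    rw [← SemidirectProduct.range_inl_eq_ker_rightHom]
    rintro _ ⟨n, rfl⟩
    have hn : n ^ p = 1 := toAdd_eq_zero.1 (ZModModule.char_nsmul_eq_zero p n.toAdd)
    rw [← map_pow, hn, map_one]
  have hone := pow_eq_one_of_map_mem_zpowers
    (isPGroup_semidirectProduct ZModModule.isPGroup_multiplicative hQ) _ hker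
    (y := foxHom (ZMod p) q x y) (by rw [hpow]; exact hqy)
  exact hqc (congrArg SemidirectProduct.right (hpow.symm.trans hone))

theorem exists_isPOpen_pow_mul_inv_notMem (p : ℕ) [Fact p.Prime] {X : Type*} {c : FreeGroup X}
    (hc : c ≠ 1) (hcent : ∀ g, Commute g c → g ∈ Subgroup.zpowers c) :
    ∃ M : Subgroup (FreeGroup X), IsPOpen p M ∧ ∀ y, y ^ p * c⁻¹ ∉ M := by
  classical
  let S : Finset (FreeGroup X) := (foxDerivative (ZMod p) c).support.biUnion fun x =>
    (foxDerivative (ZMod p) c x).coeff.support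
  obtain ⟨M, hM, hMS⟩ := exists_isPOpen_forall_mem_imp_eq_one p
    (insert c ((S ×ˢ S).image fun s => ⁅s.2 * s.1⁻¹, c⁆))
  have := hM.normal
  have := hM.finite_quotient
  let q := QuotientGroup.mk' M
  have hqc : q c ≠ 1 := fun h =>
    hc (hMS c (Finset.mem_insert_self _ _) ((QuotientGroup.eq_one_iff c).1 h))
  obtain ⟨x, hx⟩ := exists_sum_single_pow_mul_ne_zero hM.isPGroup_quotient hqc _ _
    (linearCombination_mapDomain_foxDerivative (ZMod p) q c)
  have hmemS {s : FreeGroup X} (hs : s ∈ (foxDerivative (ZMod p) c x).coeff.support) : s ∈ S := by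
    refine Finset.mem_biUnion.2 ⟨x, Finsupp.mem_support_iff.2 fun h => ?_, hs⟩
    simp [h] at hs
  refine ⟨(foxHom (ZMod p) q x).ker, .ker (isPGroup_semidirectProduct
    ZModModule.isPGroup_multiplicative hM.isPGroup_quotient) _, fun y hy => ?_⟩
  refine foxHom_pow_ne hM.isPGroup_quotient q hqc hx (fun s hs s' hs' hss => ?_) y ?_
  · refine hcent _ (commutatorElement_eq_one_iff_commute.1 (hMS _ ?_ ?_))
    · exact Finset.mem_insert_of_mem (Finset.mem_image.2
        ⟨(s, s'), Finset.mk_mem_product (hmemS hs) (hmemS hs'), rfl⟩)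
    · rw [← QuotientGroup.eq_one_iff, ← QuotientGroup.mk'_apply, map_commutatorElement]
      exact commutatorElement_eq_one_iff_commute.2 hss
  · rwa [MonoidHom.mem_ker, map_mul, map_inv, mul_inv_eq_one, map_pow] at hy

end NotPthPower

/-! ### Extension of homomorphisms from a retract -/

theorem exists_monoidHom_eq_mul_inv {A Q : Type*} [Group A] [Group Q] (f h : A →* Q)
    {Z : Subgroup Q} (hZ : Z ≤ Subgroup.center Q) (hfh : ∀ a, f a * (h a)⁻¹ ∈ Z) :
    ∃ d : A →* Z, ∀ a, (d a : Q) = f a * (h a)⁻¹ := by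
  refine ⟨MonoidHom.mk' (fun a => ⟨f a * (h a)⁻¹, hfh a⟩) fun a b => Subtype.ext ?_, fun a => rfl⟩
  have hb := Subgroup.mem_center_iff.1 (hZ (hfh b)) (h a)⁻¹
  calc f (a * b) * (h (a * b))⁻¹ = f a * (f b * (h b)⁻¹ * (h a)⁻¹) := by simp [mul_assoc]
    _ = f a * (h a)⁻¹ * (f b * (h b)⁻¹) := by rw [← hb, mul_assoc]

section ExtensionFromRetract

variable {F : Type*} [Group F] [IsFreeGroup F] {r : F →* F} {Q Q' : Type*} [Group Q] [Group Q']
  {π : Q →* Q'} {χ : F →* Q'} {f : F →* Q}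

theorem exists_lift_forall_mul_inv_mem_of_commutator_mem (hr : ∀ x, r (r x) = r x)
    (hfr : ∀ x, f (r x) = f x) (hfχ : ∀ x, π (f x) = χ (r x)) {N : Subgroup Q} [N.Normal]
    {g : F →* Q} (hgχ : π.comp g = χ) (hg : ∀ x b, ⁅f x * (g (r x))⁻¹, b⁆ ∈ N) :
    ∃ g' : F →* Q, π.comp g' = χ ∧ ∀ x, f x * (g' (r x))⁻¹ ∈ N := by
  let m := QuotientGroup.mk' N
  obtain ⟨d, hd⟩ := exists_monoidHom_eq_mul_inv (m.comp f) (m.comp (g.comp r)) le_rfl fun x => by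
    refine Subgroup.mem_center_iff.2 fun b => ?_
    obtain ⟨b, rfl⟩ := QuotientGroup.mk'_surjective N b
    have h := (QuotientGroup.eq_one_iff _).2 (hg x b)
    rw [← QuotientGroup.mk'_apply, map_commutatorElement, commutatorElement_eq_one_iff_mul_comm,
      map_mul, map_inv] at h
    exact h.symm
  let dg : F →* Q ⧸ N := ((Subgroup.center (Q ⧸ N)).subtype.comp d).noncommCoprod (m.comp g)
    (fun x y => (Subgroup.mem_center_iff.1 (d x).2 _).symm) |>.comp
      ((MonoidHom.id F).prod (MonoidHom.id F))
  have hdg : ∀ x, dg x = m (f x * (g (r x))⁻¹ * g x) := fun x => by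
    change (d x : Q ⧸ N) * m (g x) = _
    rw [hd, map_mul, map_mul, map_inv]
    rfl
  -- Modulo `N` the discrepancy of `f` and `g ∘ r` is central, so correcting `g` by it on the
  -- generators corrects it everywhere.
  let g' : F →* Q := IsFreeGroup.lift fun i =>
    f (IsFreeGroup.of i) * (g (r (IsFreeGroup.of i)))⁻¹ * g (IsFreeGroup.of i)
  have hg' : m.comp g' = dg := IsFreeGroup.ext_hom fun i => by simp [g', hdg]
  have hgχ' : ∀ x, π (g x) = χ x := DFunLike.congr_fun hgχ
  refine ⟨g', IsFreeGroup.ext_hom fun i => by simp [g', hgχ', hfχ], fun x => ?_⟩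
  rw [← QuotientGroup.ker_mk' N, MonoidHom.mem_ker, map_mul, map_inv, mul_inv_eq_one]
  calc m (f x) = m (f (r x) * (g (r (r x)))⁻¹ * g (r x)) := by rw [hfr, hr, inv_mul_cancel_right]
    _ = m (g' (r x)) := by rw [← hdg, ← hg', MonoidHom.comp_apply]

theorem exists_lift_comp_eq_of_isNilpotent [Group.IsNilpotent Q] (hr : ∀ x, r (r x) = r x)
    (hfr : ∀ x, f (r x) = f x) (hfχ : ∀ x, π (f x) = χ (r x)) (hπ : Function.Surjective π) :
    ∃ g : F →* Q, π.comp g = χ ∧ g.comp r = f := by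
  have approx : ∀ n, ∃ g : F →* Q, π.comp g = χ ∧
      ∀ x, f x * (g (r x))⁻¹ ∈ (⊤ : Subgroup Q).lowerCentralSeries n := by
    intro n
    induction n with
    | zero =>
      obtain ⟨g, hg⟩ := exists_monoidHom_comp_eq hπ χ
      exact ⟨g, hg, fun x => Subgroup.mem_top _⟩
    | succ n ih =>
      obtain ⟨g, hgχ, hg⟩ := ih
      exact exists_lift_forall_mul_inv_mem_of_commutator_mem hr hfr hfχ hgχ fun x b =>
        Subgroup.commutator_mem_commutator (hg x) (Subgroup.mem_top b)
  obtain ⟨n, hn⟩ := Subgroup.nilpotent_iff_lowerCentralSeries.1 ‹Group.IsNilpotent Q›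
  obtain ⟨g, hgχ, hg⟩ := approx n
  refine ⟨g, hgχ, MonoidHom.ext fun x => ?_⟩
  have hx := hg x
  rw [hn, Subgroup.mem_bot, mul_inv_eq_one] at hx
  exact hx.symm

end ExtensionFromRetract

theorem isPGroup_pi {p : ℕ} {Y C : Type*} [Group C] [Finite C]
    (hC : IsPGroup p C) : IsPGroup p (Y → C) := by
  obtain ⟨k, hk⟩ := isPGroup_iff_exists_pow_pow_eq_one.1 hC
  exact isPGroup_iff_pow_pow_eq_one.2 fun g => ⟨k, funext fun y => hk (g y)⟩

-- This is coinduction: such a cocycle is a homomorphism from `R` to the wreath product of `C` over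
-- `Y`.
theorem exists_cocycle_extending_character {R Y C : Type*} [Group R] [MulAction R Y] [Group C]
    (b : Y) (φ : MulAction.stabilizer R b →* C) :
    ∃ κ : R → Y → C, (∀ x x' y, κ (x * x') y = κ x y * κ x' (x⁻¹ • y)) ∧
      ∀ v : MulAction.stabilizer R b, κ v b = φ v := by
  classical
  obtain ⟨s, hsb, hs⟩ : ∃ s : Y → R, s b = 1 ∧ ∀ y ∈ MulAction.orbit R b, s y • b = y := by
    choose! t ht using fun y (hy : y ∈ MulAction.orbit R b) => hy
    refine ⟨Function.update t b 1, Function.update_self .., fun y hy => ?_⟩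
    rcases eq_or_ne y b with rfl | hyb
    · rw [Function.update_self, one_smul]
    · rw [Function.update_of_ne hyb]
      exact ht y hy
  have smul_mem (x : R) {y : Y} : x • y ∈ MulAction.orbit R b ↔ y ∈ MulAction.orbit R b := by
    rw [← MulAction.orbit_eq_iff, MulAction.orbit_smul, MulAction.orbit_eq_iff]
  have hstab (x : R) {y : Y} (hy : y ∈ MulAction.orbit R b) :
      (s y)⁻¹ * x * s (x⁻¹ • y) ∈ MulAction.stabilizer R b := by
    rw [MulAction.mem_stabilizer_iff, mul_smul, hs _ ((smul_mem _).2 hy), mul_smul,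
      smul_inv_smul, inv_smul_eq_iff, hs y hy]
  refine ⟨fun x y => if hy : y ∈ MulAction.orbit R b then φ ⟨_, hstab x hy⟩ else 1,
    fun x x' y => ?_, fun v => ?_⟩
  · by_cases hy : y ∈ MulAction.orbit R b
    · simp only [hy, smul_mem, dif_pos, ← map_mul]
      congr 1
      ext
      simp only [Subgroup.coe_mul, mul_inv_rev, mul_smul]
      group
    · simp only [hy, smul_mem, dif_neg, not_false_eq_true, mul_one]
  · refine (dif_pos (MulAction.mem_orbit_self b)).trans ?_
    congr 1
    ext
    simp [hsb, MulAction.mem_stabilizer_iff.1 (inv_mem v.2)]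

theorem exists_character_comap_extending {p : ℕ} [Fact p.Prime] {F : Type*} [Group F]
    [IsFreeGroup F] {r : F →* F} (hr : ∀ x, r (r x) = r x) {G C : Type*} [Group G] [Finite G]
    [CommGroup C] [Finite C] (hG : IsPGroup p G) (hC : IsPGroup p C) (q : F →* G)
    (W : Subgroup G) (φ : (r.range ⊓ W.comap q : Subgroup F) →* C) :
    ∃ ψ : W.comap q →* C, ψ.comp (Subgroup.inclusion inf_le_right) = φ := by
  let b : G ⧸ W := ((1 : G) : G ⧸ W)
  have hb (g : G) : g • b = b ↔ g ∈ W := by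
    rw [← MulAction.mem_stabilizer_iff, MulAction.stabilizer_quotient]
  let _ : MulAction r.range (G ⧸ W) := MulAction.compHom _ (q.comp r.range.subtype)
  have hstab (v : MulAction.stabilizer r.range b) : (v : F) ∈ r.range ⊓ W.comap q :=
    ⟨v.1.2, (hb _).1 v.2⟩
  obtain ⟨κ, hκ, hκφ⟩ := exists_cocycle_extending_character b (φ.comp
    ((r.range.subtype.comp (Subgroup.subtype _)).codRestrict _ hstab))
  let f : r.range →* (G ⧸ W → C) ⋊[mulAutArrow] G := MonoidHom.mk' (fun x => ⟨κ x, q x⟩)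
    fun x x' => by
      ext1
      · funext y
        have hinv : x⁻¹ • y = (q x)⁻¹ • y := congrArg (· • y) (map_inv q (x : F))
        exact (hκ x x' y).trans (congrArg (κ x y * κ x' ·) hinv)
      · exact map_mul q _ _
  have hrange (x : F) : r.rangeRestrict (r x) = r.rangeRestrict x := Subtype.ext (hr x)
  have := (isPGroup_semidirectProduct (φ := mulAutArrow) (isPGroup_pi (Y := G ⧸ W) hC)
    hG).isNilpotent
  obtain ⟨g, hgq, hgf⟩ := exists_lift_comp_eq_of_isNilpotent (f := f.comp r.rangeRestrict)
    (χ := q) hr (fun x => congrArg f (hrange x)) (fun x => rfl)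
    SemidirectProduct.rightHom_surjective
  refine ⟨MonoidHom.mk' (fun u => (g u).left b) fun u v => ?_, MonoidHom.ext fun v => ?_⟩
  · have hu : (g u).right⁻¹ • b = b := by
      rw [show (g u).right = q u from DFunLike.congr_fun hgq (u : F), hb]
      exact inv_mem u.2
    rw [Subgroup.coe_mul, map_mul, SemidirectProduct.mul_left, Pi.mul_apply]
    exact congrArg (_ * (g v).left ·) hu
  · obtain ⟨_, ⟨x, rfl⟩, hx⟩ := v
    have hg : g (r x) = f (r.rangeRestrict x) := DFunLike.congr_fun hgf x
    change (g (r x)).left b = _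
    rw [hg]
    exact hκφ ⟨r.rangeRestrict x, (hb _).2 hx⟩

/-! ### The topology induced on a free group of rank two -/

/-- The homomorphism `f` on `A` is continuous for the topology that `j` induces on `A` from the
pro-`p` topology of `F`, with `Q` discrete. -/
def IsPContinuous (p : ℕ) {A F Q : Type*} [Group A] [Group F] [Group Q] (j : A →* F)
    (f : A →* Q) : Prop :=
  ∃ M : Subgroup F, IsPOpen p M ∧ M.comap j ≤ f.ker

theorem IsPContinuous.of_eqOn_ker {p : ℕ} {A F Q Z : Type*} [Group A] [Group F] [Group Q]
    [Group Z] {j : A →* F} {f g : A →* Q} {d : A →* Z} (hg : IsPContinuous p j g)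
    (hd : IsPContinuous p j d) (h : Set.EqOn f g d.ker) : IsPContinuous p j f := by
  obtain ⟨M, hM, hMg⟩ := hg
  obtain ⟨N, hN, hNd⟩ := hd
  exact ⟨M ⊓ N, hM.inf hN, fun a ha => (h (hNd ha.2)).trans (hMg ha.1)⟩

theorem le_comap_range_mk' {A F : Type*} [Group A] [Group F] (j : A →* F) (M : Subgroup F)
    [M.Normal] : M ≤ ((QuotientGroup.mk' M).comp j).range.comap (QuotientGroup.mk' M) := by
  rw [← Subgroup.map_le_iff_le_comap, QuotientGroup.map_mk'_self]
  exact bot_le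

theorem exists_monoidHom_comap_range_eq {A F Q : Type*} [Group A] [Group F] [Group Q] {j : A →* F}
    {f : A →* Q} {M : Subgroup F} [M.Normal] (hf : M.comap j ≤ f.ker) :
    ∃ g : ((QuotientGroup.mk' M).comp j).range.comap (QuotientGroup.mk' M) →* Q,
      ∀ u a, QuotientGroup.mk' M (Subtype.val u) = QuotientGroup.mk' M (j a) → g u = f a := by
  let q := QuotientGroup.mk' M
  have hker : (q.comp j).rangeRestrict.ker ≤ f.ker := by
    rwa [MonoidHom.ker_rangeRestrict, ← MonoidHom.comap_ker, QuotientGroup.ker_mk']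
  refine ⟨((q.comp j).rangeRestrict.liftOfSurjective (q.comp j).rangeRestrict_surjective
    ⟨f, hker⟩).comp (q.subgroupComap _), fun u a hu => ?_⟩
  have hua : q.subgroupComap _ u = (q.comp j).rangeRestrict a := Subtype.ext hu
  rw [MonoidHom.comp_apply, hua]
  exact (q.comp j).rangeRestrict.liftOfRightInverse_comp_apply _
    (Function.rightInverse_surjInv (q.comp j).rangeRestrict_surjective) ⟨f, hker⟩ a

theorem exists_isPContinuous_mul_inv_mem {p : ℕ} {A F Q : Type*} [Group A] [Group F]
    [IsFreeGroup F] [Group Q] [Finite Q] {j : A →* F} (hQ : IsPGroup p Q) (f : A →* Q)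
    {Z : Subgroup Q} [Z.Normal] (hf : IsPContinuous p j ((QuotientGroup.mk' Z).comp f)) :
    ∃ g : A →* Q, IsPContinuous p j g ∧ ∀ a, f a * (g a)⁻¹ ∈ Z := by
  obtain ⟨M, hM, hMf⟩ := hf
  have := hM.normal
  obtain ⟨f', hf'⟩ := exists_monoidHom_comap_range_eq hMf
  have := subgroupIsFreeOfIsFree (((QuotientGroup.mk' M).comp j).range.comap (QuotientGroup.mk' M))
  obtain ⟨g, hg⟩ := exists_monoidHom_comp_eq (QuotientGroup.mk'_surjective Z) f'
  obtain ⟨N, -, hN, hNg⟩ := hM.exists_le_subgroupOf_le_ker (le_comap_range_mk' j M) hQ g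
  let ι := j.codRestrict (((QuotientGroup.mk' M).comp j).range.comap (QuotientGroup.mk' M))
    fun a => ⟨a, rfl⟩
  refine ⟨g.comp ι, ⟨N, hN, fun a ha => hNg (x := ι a) ha⟩, fun a => ?_⟩
  rw [← QuotientGroup.ker_mk' Z, MonoidHom.mem_ker, map_mul, map_inv, mul_inv_eq_one]
  exact (hf' (ι a) a rfl).symm.trans (DFunLike.congr_fun hg (ι a)).symm

theorem not_commute_of_of {X : Type*} {a b : X} (hab : a ≠ b) :
    ¬ Commute (FreeGroup.of a) (FreeGroup.of b) := by
  classical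
  intro h
  have hmap := h.map (FreeGroup.lift fun x =>
    if x = a then Equiv.swap (0 : Fin 3) 1 else Equiv.swap (1 : Fin 3) 2)
  simp only [FreeGroup.lift_apply_of, if_pos, if_neg hab.symm] at hmap
  exact absurd hmap.eq (by decide)

section Continuity

variable {p : ℕ} [Fact p.Prime] {F : Type*} [Group F] [IsFreeGroup F]
  {j : FreeGroup (Fin 2) →* F}

theorem exists_isPOpen_not_isCyclic_range (p : ℕ) [Fact p.Prime] (hj : Function.Injective j) :
    ∃ (M : Subgroup F) (_ : M.Normal), IsPOpen p M ∧
      ¬ IsCyclic ((QuotientGroup.mk' M).comp j).range := by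
  let x : FreeGroup (Fin 2) := FreeGroup.of 0
  let y : FreeGroup (Fin 2) := FreeGroup.of 1
  have hne : j ⁅x, y⁆ ≠ 1 := by
    rw [Ne, map_eq_one_iff j hj, commutatorElement_eq_one_iff_commute]
    exact not_commute_of_of zero_ne_one
  obtain ⟨M, hM, hjM⟩ := exists_isPOpen_notMem p hne
  have := hM.normal
  refine ⟨M, this, hM, fun hcyc => hjM ?_⟩
  let f := (QuotientGroup.mk' M).comp j
  have hcomm : f.rangeRestrict ⁅x, y⁆ = 1 := by
    rw [map_commutatorElement, commutatorElement_eq_one_iff_mul_comm]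
    exact hcyc.isMulCommutative.is_comm.comm _ _
  exact (QuotientGroup.eq_one_iff _).1 (congrArg Subtype.val hcomm)

theorem isPContinuous_character (hj : Function.Injective j)
    (χ : FreeGroup (Fin 2) →* Multiplicative (ZMod p)) : IsPContinuous p j χ := by
  obtain ⟨M, _, hM, hcyc⟩ := exists_isPOpen_not_isCyclic_range p hj
  have := hM.finite_quotient
  refine ⟨M, hM, fun a ha => ?_⟩
  let f := (QuotientGroup.mk' M).comp j
  obtain ⟨μ₁, μ₂, ⟨_, a₁, rfl⟩, ⟨_, a₂, rfl⟩, h₁, h₁₂, h₂⟩ :=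
    exists_independent_characters (hM.isPGroup_quotient.to_subgroup f.range) hcyc
  have hfa : f.rangeRestrict a = 1 := Subtype.ext ((QuotientGroup.eq_one_iff _).2 ha)
  replace h₁₂ : μ₂ (f.rangeRestrict a₁) = 1 := h₁₂
  by_contra hχ
  have := card_le_of_triangular_characters
    ![χ, μ₁.comp f.rangeRestrict, μ₂.comp f.rangeRestrict] ![a, a₁, a₂]
    (by simpa [Fin.forall_fin_succ] using ⟨hχ, h₁, h₂⟩)
    (by simpa [Fin.forall_fin_succ, hfa] using h₁₂)
  simp at this

theorem isPContinuous_of_isPGroup (hj : Function.Injective j) {Q : Type*} [Group Q]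
    [Finite Q] (hQ : IsPGroup p Q) (f : FreeGroup (Fin 2) →* Q) : IsPContinuous p j f := by
  induction hn : Nat.card Q using Nat.strong_induction_on generalizing Q with
  | _ n ih =>
  subst hn
  rcases subsingleton_or_nontrivial Q with _ | _
  · exact ⟨⊤, IsPOpen.top, fun a _ => Subsingleton.elim _ _⟩
  have := hQ.center_nontrivial
  obtain ⟨⟨z, hzc⟩, hz⟩ := exists_prime_orderOf_dvd_card' (G := Subgroup.center Q) p
    ((hQ.to_subgroup _).card_eq_or_dvd.resolve_left Finite.one_lt_card.ne')
  let Z := Subgroup.zpowers z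
  have hZ : Z ≤ Subgroup.center Q := Subgroup.zpowers_le.2 hzc
  have hZcard : Nat.card Z = p := by rw [Nat.card_zpowers, ← hz, Subgroup.orderOf_mk]
  have : Z.Normal := ⟨fun y hy g => by
    rwa [Subgroup.mem_center_iff.1 (hZ hy) g, mul_inv_cancel_right]⟩
  have hlt : Nat.card (Q ⧸ Z) < Nat.card Q := by
    rw [Subgroup.card_eq_card_quotient_mul_card_subgroup Z, hZcard]
    exact lt_mul_of_one_lt_right Nat.card_pos (Fact.out : p.Prime).one_lt
  obtain ⟨g, hg, hfg⟩ := exists_isPContinuous_mul_inv_mem hQ f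
    (ih _ hlt (hQ.to_quotient Z) ((QuotientGroup.mk' Z).comp f) rfl)
  obtain ⟨d, hd⟩ := exists_monoidHom_eq_mul_inv f g hZ hfg
  let e : Z ≃* Multiplicative (ZMod p) := mulEquivOfPrimeCardEq (p := p) hZcard (by simp)
  refine hg.of_eqOn_ker (isPContinuous_character hj (e.toMonoidHom.comp d)) fun a ha => ?_
  rw [← mul_inv_eq_one, ← hd, OneMemClass.coe_eq_one]
  exact e.map_eq_one_iff.1 ha

end Continuity

/-! ### Elements fixed modulo an open subgroup -/

/-- The elements `a` of `A` whose image `j a` is fixed by `r` modulo `M`. The normal core makes the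
definition meaningful for every subgroup; it is applied to normal subgroups, where it is `M`. -/
def fixedModulo {A F : Type*} [Group A] [Group F] (j : A →* F) (r : F →* F) (M : Subgroup F) :
    Subgroup A :=
  ((QuotientGroup.mk' M.normalCore).comp j).eqLocus
    ((QuotientGroup.mk' M.normalCore).comp (r.comp j))

section FixedModulo

variable {p : ℕ} {A F : Type*} [Group A] [Group F] {j : A →* F} {r : F →* F} {M : Subgroup F}

theorem mem_fixedModulo (hM : M.Normal) {a : A} :
    a ∈ fixedModulo j r M ↔ (j a)⁻¹ * r (j a) ∈ M := by
  conv_rhs => rw [← M.normalCore_eq_self, ← QuotientGroup.eq]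
  rfl

theorem fixedModulo_mono {N : Subgroup F} (h : M ≤ N) :
    fixedModulo j r M ≤ fixedModulo j r N := by
  intro a ha
  have hmem : (j a)⁻¹ * r (j a) ∈ M.normalCore := QuotientGroup.eq.1 ha
  exact QuotientGroup.eq.2 (Subgroup.normalCore_mono h hmem)

theorem eqLocus_le_fixedModulo : (r.comp j).eqLocus j ≤ fixedModulo j r M := fun _ ha =>
  congrArg (QuotientGroup.mk' M.normalCore) (Eq.symm ha)

theorem exists_isPOpen_map_fixedModulo_eq (hr : ∀ x, r (r x) = r x) {Q : Type*} [Group Q]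
    [Finite Q] {Ψ : A →* Q} (hΨ : IsPContinuous p j Ψ) :
    ∃ M : Subgroup F, IsPOpen p M ∧ M ≤ M.comap r ∧ M.comap j ≤ Ψ.ker ∧
      ∀ N ≤ M, IsPOpen p N → (fixedModulo j r N).map Ψ = (fixedModulo j r M).map Ψ := by
  obtain ⟨M, ⟨hM, hMΨ⟩, hmin⟩ := exists_minimalFor_of_wellFoundedLT
    (fun M : Subgroup F => IsPOpen p M ∧ M.comap j ≤ Ψ.ker) (fun M => (fixedModulo j r M).map Ψ) hΨ
  have hstable (N : Subgroup F) (hNM : N ≤ M) (hN : IsPOpen p N) :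
      (fixedModulo j r N).map Ψ = (fixedModulo j r M).map Ψ := by
    have hle := Subgroup.map_mono (f := Ψ) (fixedModulo_mono (j := j) (r := r) hNM)
    exact hle.antisymm (hmin ⟨hN, (Subgroup.comap_mono hNM).trans hMΨ⟩ hle)
  have hopen := hM.inf (hM.comap r)
  refine ⟨M ⊓ M.comap r, hopen, fun x hx => ⟨hx.2, ?_⟩,
    (Subgroup.comap_mono inf_le_left).trans hMΨ, fun N hNM hN => ?_⟩
  · change r (r x) ∈ M
    rw [hr]
    exact hx.2
  · rw [hstable N (hNM.trans inf_le_left) hN, hstable _ inf_le_left hopen]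

theorem mem_fixedModulo_of_mk_eq [M.Normal] (hMr : M ≤ M.comap r) {v : F} (hv : r v = v)
    {a : A} (ha : QuotientGroup.mk' M (j a) = QuotientGroup.mk' M v) : a ∈ fixedModulo j r M := by
  have hav : (j a)⁻¹ * v ∈ M := QuotientGroup.eq.1 ha
  have hrav : (r (j a))⁻¹ * v ∈ M := by simpa [hv] using hMr hav
  rw [mem_fixedModulo ‹_›]
  simpa [mul_assoc] using M.mul_mem hav (M.inv_mem hrav)

theorem exists_extension_of_character_map_fixedModulo [Fact p.Prime] [IsFreeGroup F]
    (hr : ∀ x, r (r x) = r x) {Q C : Type*} [Group Q] [CommGroup C] [Finite C] (hC : IsPGroup p C)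
    {Ψ : A →* Q} (hM : IsPOpen p M) (hMr : M ≤ M.comap r) (hΨ : M.comap j ≤ Ψ.ker)
    (χ : (fixedModulo j r M).map Ψ →* C) :
    ∃ χ' : A →* C, ∃ N ≤ M, IsPOpen p N ∧
      ∀ a ∈ fixedModulo j r N, ∀ h : Ψ a ∈ (fixedModulo j r M).map Ψ, χ' a = χ ⟨Ψ a, h⟩ := by
  have := hM.normal
  have := hM.finite_quotient
  let q := QuotientGroup.mk' M
  let U := (q.comp j).range.comap q
  obtain ⟨g, hg⟩ := exists_monoidHom_comap_range_eq hΨ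
  have hgmem (v : (r.range ⊓ U : Subgroup F)) :
      g ⟨v, v.2.2⟩ ∈ (fixedModulo j r M).map Ψ := by
    obtain ⟨_, ⟨x, rfl⟩, a, ha⟩ := v
    exact ⟨a, mem_fixedModulo_of_mk_eq hMr (hr x) ha, (hg _ a ha.symm).symm⟩
  obtain ⟨ψ, hψ⟩ := exists_character_comap_extending hr hM.isPGroup_quotient hC q (q.comp j).range
    (χ.comp ((g.comp (Subgroup.inclusion inf_le_right)).codRestrict _ hgmem))
  obtain ⟨N, hNM, hN, hNψ⟩ := hM.exists_le_subgroupOf_le_ker (le_comap_range_mk' j M) hC ψ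
  refine ⟨ψ.comp (j.codRestrict U fun a => ⟨a, rfl⟩), N, hNM, hN, fun a ha h => ?_⟩
  rw [mem_fixedModulo hN.normal] at ha
  have hqa : q (r (j a)) = q (j a) := (QuotientGroup.eq.2 (hNM ha)).symm
  let u : U := ⟨j a, a, rfl⟩
  let v : (r.range ⊓ U : Subgroup F) := ⟨r (j a), ⟨j a, rfl⟩, a, hqa.symm⟩
  have huv : u⁻¹ * Subgroup.inclusion inf_le_right v ∈ ψ.ker := hNψ ha
  rw [MonoidHom.mem_ker, map_mul, map_inv, inv_mul_eq_one] at huv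
  calc ψ u = χ ⟨g ⟨v, v.2.2⟩, hgmem v⟩ := huv.trans (DFunLike.congr_fun hψ v)
    _ = χ ⟨Ψ a, h⟩ := congrArg χ (Subtype.ext (hg _ a hqa))

theorem exists_isPOpen_fixedModulo_le_ker_character (p : ℕ) [Fact p.Prime] [IsFreeGroup F] {h : A}
    (hh : r (j h) ≠ j h) : ∃ M : Subgroup F, IsPOpen p M ∧
      ∃ l : A →* Multiplicative (ZMod p), l ≠ 1 ∧ fixedModulo j r M ≤ l.ker := by
  obtain ⟨M, hM, hhM⟩ := exists_isPOpen_notMem p (w := (j h)⁻¹ * r (j h))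
    fun hone => hh (inv_mul_eq_one.1 hone).symm
  have := hM.normal
  have := hM.finite_quotient
  let q := QuotientGroup.mk' M
  let f := (q.comp j).prod (q.comp (r.comp j))
  have hG : IsPGroup p ((F ⧸ M) × (F ⧸ M)) := by
    obtain ⟨k, hk⟩ := isPGroup_iff_exists_pow_pow_eq_one.1 hM.isPGroup_quotient
    exact isPGroup_iff_pow_pow_eq_one.2 fun g => ⟨k, Prod.ext (hk g.1) (hk g.2)⟩
  have hproper : (fixedModulo j r M).map f.rangeRestrict ≠ ⊤ := by
    intro htop
    obtain ⟨a, ha, hah⟩ : f.rangeRestrict h ∈ (fixedModulo j r M).map f.rangeRestrict :=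
      htop ▸ Subgroup.mem_top _
    obtain ⟨hj, hrj⟩ := Prod.mk.inj (congrArg Subtype.val hah)
    have hfix : q (j a) = q (r (j a)) := QuotientGroup.eq.2 ((mem_fixedModulo ‹_›).1 ha)
    exact hhM (QuotientGroup.eq.1 (hj.symm.trans (hfix.trans hrj)))
  obtain ⟨μ, hμ, hle⟩ := exists_character_ne_one_of_ne_top (hG.to_subgroup f.range) hproper
  refine ⟨M, hM, μ.comp f.rangeRestrict, fun hone => hμ ?_, ?_⟩
  · exact (MonoidHom.cancel_right f.rangeRestrict_surjective).1 hone
  · rwa [← MonoidHom.comap_ker, ← Subgroup.map_le_iff_le_comap]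

end FixedModulo

section RankTwo

variable {F : Type*} [Group F] [IsFreeGroup F] {j : FreeGroup (Fin 2) →* F} {r : F →* F}

theorem isCyclic_map_fixedModulo {p : ℕ} [Fact p.Prime] (hr : ∀ x, r (r x) = r x)
    {h : FreeGroup (Fin 2)} (hh : r (j h) ≠ j h) {Q : Type*} [Group Q] [Finite Q]
    (hQ : IsPGroup p Q) {Ψ : FreeGroup (Fin 2) →* Q} {M : Subgroup F} (hM : IsPOpen p M)
    (hMr : M ≤ M.comap r) (hΨ : M.comap j ≤ Ψ.ker)
    (hstable : ∀ N ≤ M, IsPOpen p N → (fixedModulo j r N).map Ψ = (fixedModulo j r M).map Ψ) :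
    IsCyclic ((fixedModulo j r M).map Ψ) := by
  by_contra hcyc
  obtain ⟨μ₁, μ₂, ⟨w₁, hw₁⟩, ⟨w₂, hw₂⟩, h₁, h₁₂, h₂⟩ :=
    exists_independent_characters (hQ.to_subgroup _) hcyc
  obtain ⟨χ₁, N₁, hN₁M, hN₁, hχ₁⟩ := exists_extension_of_character_map_fixedModulo hr
    ZModModule.isPGroup_multiplicative hM hMr hΨ μ₁
  obtain ⟨χ₂, N₂, -, hN₂, hχ₂⟩ := exists_extension_of_character_map_fixedModulo hr
    ZModModule.isPGroup_multiplicative hM hMr hΨ μ₂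
  obtain ⟨K, hK, l, hl, hKl⟩ := exists_isPOpen_fixedModulo_le_ker_character p hh
  obtain ⟨b, hb⟩ := DFunLike.exists_ne hl
  have hNN₁ : N₁ ⊓ N₂ ⊓ K ≤ N₁ := inf_le_left.trans inf_le_left
  have hNN₂ : N₁ ⊓ N₂ ⊓ K ≤ N₂ := inf_le_left.trans inf_le_right
  have hsurj := hstable _ (hNN₁.trans hN₁M) ((hN₁.inf hN₂).inf hK)
  obtain ⟨a₁, ha₁, rfl⟩ := hsurj.ge hw₁
  obtain ⟨a₂, ha₂, rfl⟩ := hsurj.ge hw₂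
  rw [← hχ₁ a₁ (fixedModulo_mono hNN₁ ha₁)] at h₁
  rw [← hχ₂ a₁ (fixedModulo_mono hNN₂ ha₁)] at h₁₂
  rw [← hχ₂ a₂ (fixedModulo_mono hNN₂ ha₂)] at h₂
  have hl₁ : l a₁ = 1 := hKl (fixedModulo_mono inf_le_right ha₁)
  have hl₂ : l a₂ = 1 := hKl (fixedModulo_mono inf_le_right ha₂)
  have := card_le_of_triangular_characters ![χ₁, χ₂, l] ![a₁, a₂, b]
    (by simpa [Fin.forall_fin_succ] using ⟨h₁, h₂, hb⟩)
    (by simpa [Fin.forall_fin_succ] using ⟨h₁₂, hl₁, hl₂⟩)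
  simp at this

theorem exists_isCyclic_map_eqLocus_le {p : ℕ} [Fact p.Prime] (hr : ∀ x, r (r x) = r x)
    {h : FreeGroup (Fin 2)} (hh : r (j h) ≠ j h) {Q : Type*} [Group Q] [Finite Q]
    (hQ : IsPGroup p Q) {Ψ : FreeGroup (Fin 2) →* Q} (hΨ : IsPContinuous p j Ψ) :
    ∃ Δ : Subgroup Q, IsCyclic Δ ∧ ((r.comp j).eqLocus j).map Ψ ≤ Δ ∧
      ∀ χ : Δ →* Multiplicative (ZMod p), ∃ χ' : FreeGroup (Fin 2) →* Multiplicative (ZMod p),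
        ∀ a ∈ (r.comp j).eqLocus j, ∀ ha : Ψ a ∈ Δ, χ' a = χ ⟨Ψ a, ha⟩ := by
  obtain ⟨M, hM, hMr, hMΨ, hstable⟩ := exists_isPOpen_map_fixedModulo_eq hr hΨ
  refine ⟨(fixedModulo j r M).map Ψ, isCyclic_map_fixedModulo hr hh hQ hM hMr hMΨ hstable,
    Subgroup.map_mono eqLocus_le_fixedModulo, fun χ => ?_⟩
  obtain ⟨χ', N, -, -, hχ'⟩ := exists_extension_of_character_map_fixedModulo hr
    ZModModule.isPGroup_multiplicative hM hMr hMΨ χ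
  exact ⟨χ', fun a ha => hχ' a (eqLocus_le_fixedModulo ha)⟩

theorem commute_of_mem_eqLocus (hj : Function.Injective j) (hr : ∀ x, r (r x) = r x)
    {h : FreeGroup (Fin 2)} (hh : r (j h) ≠ j h) {u v : FreeGroup (Fin 2)}
    (hu : u ∈ (r.comp j).eqLocus j) (hv : v ∈ (r.comp j).eqLocus j) : Commute u v := by
  by_contra hne
  rw [← commutatorElement_eq_one_iff_commute, ← map_eq_one_iff j hj] at hne
  obtain ⟨M, hM, huvM⟩ := exists_isPOpen_notMem 2 hne
  have := hM.normal
  have := hM.finite_quotient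
  let q := QuotientGroup.mk' M
  have hq : IsPContinuous 2 j (q.comp j) := ⟨M, hM, by
    rw [← MonoidHom.comap_ker, QuotientGroup.ker_mk']⟩
  obtain ⟨Δ, hcyc, hΔ, -⟩ := exists_isCyclic_map_eqLocus_le hr hh hM.isPGroup_quotient hq
  have hcomm : Commute (q (j u)) (q (j v)) := congrArg Subtype.val
    (hcyc.isMulCommutative.is_comm.comm ⟨_, hΔ ⟨u, hu, rfl⟩⟩ ⟨_, hΔ ⟨v, hv, rfl⟩⟩)
  refine huvM ((QuotientGroup.eq_one_iff _).1 ?_)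
  change q (j ⁅u, v⁆) = 1
  rwa [map_commutatorElement, map_commutatorElement, commutatorElement_eq_one_iff_commute]

theorem exists_character_ne_one_of_mem_eqLocus (p : ℕ) [Fact p.Prime] (hj : Function.Injective j)
    (hr : ∀ x, r (r x) = r x) {h : FreeGroup (Fin 2)} (hh : r (j h) ≠ j h)
    {c : FreeGroup (Fin 2)} (hc : c ≠ 1) (hcr : c ∈ (r.comp j).eqLocus j)
    (hcent : ∀ g, Commute g c → g ∈ Subgroup.zpowers c) :
    ∃ χ : FreeGroup (Fin 2) →* Multiplicative (ZMod p), χ c ≠ 1 := by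
  obtain ⟨M, hM, hpow⟩ := exists_isPOpen_pow_mul_inv_notMem p hc hcent
  have := hM.normal
  have := hM.finite_quotient
  have hG := hM.isPGroup_quotient
  let Ψ := QuotientGroup.mk' M
  obtain ⟨Δ, _, hΔ, hext⟩ :=
    exists_isCyclic_map_eqLocus_le hr hh hG (isPContinuous_of_isPGroup hj hG Ψ)
  have hcΔ : Ψ c ∈ Δ := hΔ ⟨c, hcr, rfl⟩
  obtain ⟨μ, hμ⟩ := exists_character_ne_one_of_forall_pow_ne (hG.to_subgroup Δ)
    (w := ⟨Ψ c, hcΔ⟩) fun y hy => by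
      obtain ⟨a, ha⟩ := QuotientGroup.mk'_surjective M y
      have hac : Ψ a ^ p = Ψ c := (congrArg (· ^ p) ha).trans (congrArg Subtype.val hy)
      refine hpow a ((QuotientGroup.eq_one_iff _).1 ?_)
      change Ψ (a ^ p * c⁻¹) = 1
      rw [map_mul, map_inv, map_pow, hac, mul_inv_cancel]
  obtain ⟨χ, hχ⟩ := hext μ
  exact ⟨χ, (hχ c hcr hcΔ).trans_ne hμ⟩

end RankTwo

/-! ### The fixed subgroup is a retract -/

theorem isCyclic_of_forall_commute {G : Type*} [Group G] [IsFreeGroup G]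
    (h : ∀ x y : G, Commute x y) : IsCyclic G := by
  have : Subsingleton (IsFreeGroup.Generators G) := ⟨fun a b => by_contra fun hab =>
    not_commute_of_of hab ((commute_map_iff (IsFreeGroup.mulEquiv G).injective).1 (h _ _))⟩
  have : IsCyclic (FreeGroup (IsFreeGroup.Generators G)) := by
    rcases isEmpty_or_nonempty (IsFreeGroup.Generators G) with _ | ⟨⟨a⟩⟩
    · infer_instance
    · have := uniqueOfSubsingleton a
      infer_instance
  exact (IsFreeGroup.mulEquiv G).isCyclic.1 this

theorem exists_eq_zpowers_of_forall_commute {F : Type*} [Group F] [IsFreeGroup F]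
    {K : Subgroup F} (h : ∀ x ∈ K, ∀ y ∈ K, Commute x y) : ∃ c, K = Subgroup.zpowers c := by
  have := subgroupIsFreeOfIsFree K
  have := isCyclic_of_forall_commute fun x y : K => Subtype.ext (h x x.2 y y.2)
  obtain ⟨c, hc⟩ := (Subgroup.isCyclic_iff_exists_zpowers_eq_top K).1 this
  exact ⟨c, hc.symm⟩

theorem exists_zpow_eq_of_commute {F : Type*} [Group F] [IsFreeGroup F] {g c : F}
    (h : Commute g c) : ∃ (e : F) (k m : ℤ), e ^ k = g ∧ e ^ m = c := by
  have hcomm : ∀ x ∈ ({g, c} : Set F), ∀ y ∈ ({g, c} : Set F), x * y = y * x := by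
    rintro x (rfl | rfl) y (rfl | rfl)
    exacts [rfl, h, h.symm, rfl]
  have := Subgroup.isMulCommutative_closure hcomm
  obtain ⟨e, he⟩ := exists_eq_zpowers_of_forall_commute (K := Subgroup.closure {g, c})
    fun x hx y hy => congrArg Subtype.val (mul_comm' (⟨x, hx⟩ : Subgroup.closure {g, c}) ⟨y, hy⟩)
  obtain ⟨k, hk⟩ : g ∈ Subgroup.zpowers e := he ▸ Subgroup.subset_closure (Or.inl rfl)
  obtain ⟨m, hm⟩ : c ∈ Subgroup.zpowers e := he ▸ Subgroup.subset_closure (Or.inr rfl)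
  exact ⟨e, k, m, hk, hm⟩

theorem exists_monoidHom_int_eq_ofAdd_one {F : Type*} [Group F] [IsFreeGroup F] {c : F}
    (h : ∀ p : ℕ, p.Prime → ∃ χ : F →* Multiplicative (ZMod p), χ c ≠ 1) :
    ∃ τ : F →* Multiplicative ℤ, τ c = Multiplicative.ofAdd 1 := by
  let V : Subgroup (Multiplicative ℤ) := (MonoidHom.eval c).range
  obtain ⟨d, hd⟩ := (Subgroup.isCyclic_iff_exists_zpowers_eq_top V).1 inferInstance
  obtain ⟨τ, hτ⟩ : d ∈ V := hd ▸ Subgroup.mem_zpowers d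
  suffices hunit : d.toAdd.natAbs = 1 by
    rcases Int.natAbs_eq_iff.1 hunit with hone | hone
    · exact ⟨τ, hτ.trans hone⟩
    · exact ⟨τ⁻¹, (congrArg (·⁻¹) hτ).trans (Multiplicative.toAdd.injective (by simp [hone]))⟩
  by_contra hne
  obtain ⟨p, hp, hpd⟩ := Nat.exists_prime_and_dvd hne
  obtain ⟨χ, hχ⟩ := h p hp
  obtain ⟨σ, rfl⟩ := exists_monoidHom_comp_eq
    (π := AddMonoidHom.toMultiplicative (Int.castAddHom (ZMod p))) ZMod.intCast_surjective χ
  obtain ⟨k, hk⟩ : σ c ∈ Subgroup.zpowers d := hd ▸ ⟨σ, rfl⟩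
  refine hχ ((ZMod.intCast_zmod_eq_zero_iff_dvd _ p).2 ?_)
  change d ^ k = σ c at hk
  rw [← hk]
  exact (Int.natCast_dvd.2 hpd).mul_left k

theorem isRetract_top {G : Type*} [Group G] : IsRetract (⊤ : Subgroup G) :=
  ⟨MonoidHom.id G, MonoidHom.range_eq_top.2 Function.surjective_id, fun _ _ => rfl⟩

theorem isRetract_bot {G : Type*} [Group G] : IsRetract (⊥ : Subgroup G) :=
  ⟨1, MonoidHom.range_one, fun _ hx => (Subgroup.mem_bot.1 hx).symm⟩

theorem isRetract_zpowers {G : Type*} [Group G] {c : G} {τ : G →* Multiplicative ℤ}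
    (hτ : τ c = Multiplicative.ofAdd 1) : IsRetract (Subgroup.zpowers c) := by
  have hfix : ∀ x ∈ Subgroup.zpowers c, zpowersHom G c (τ x) = x := by
    rintro _ ⟨k, rfl⟩
    simp [hτ]
  refine ⟨(zpowersHom G c).comp τ, le_antisymm ?_ fun x hx => ⟨x, hfix x hx⟩, hfix⟩
  rintro _ ⟨a, rfl⟩
  exact ⟨(τ a).toAdd, rfl⟩

theorem IsRetract.map {G G' : Type*} [Group G] [Group G'] {R : Subgroup G} (hR : IsRetract R)
    (e : G ≃* G') : IsRetract (R.map e.toMonoidHom) := by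
  obtain ⟨r, rfl, hr⟩ := hR
  refine ⟨e.toMonoidHom.comp (r.comp e.symm.toMonoidHom), ?_, ?_⟩
  · rw [MonoidHom.range_comp, MonoidHom.range_comp, MonoidHom.range_eq_top.2 e.symm.surjective,
      ← MonoidHom.range_eq_map]
  · rintro _ ⟨x, hx, rfl⟩
    simp [hr x hx]

theorem isMulTorsionFree_of_isFreeGroup (F : Type*) [Group F] [IsFreeGroup F] :
    IsMulTorsionFree F :=
  Function.Injective.isMulTorsionFree (IsFreeGroup.toFreeGroup F).toMonoidHom
    (IsFreeGroup.toFreeGroup F).injective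

theorem mem_zpowers_of_commute_of_eqLocus_eq {A B : Type*} [Group A] [IsFreeGroup A] [Group B]
    [IsMulTorsionFree B] {f f' : A →* B} {c : A} (hc : c ≠ 1)
    (hE : f.eqLocus f' = Subgroup.zpowers c) {g : A} (hg : Commute g c) :
    g ∈ Subgroup.zpowers c := by
  obtain ⟨e, k, m, rfl, rfl⟩ := exists_zpow_eq_of_commute hg
  have hm : m ≠ 0 := by
    rintro rfl
    exact hc (zpow_zero e)
  have hem : f (e ^ m) = f' (e ^ m) := hE.ge (Subgroup.mem_zpowers _)
  rw [map_zpow, map_zpow, zpow_left_inj hm] at hem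
  exact Subgroup.zpow_mem _ (hE.le hem) k

theorem isRetract_eqLocus {F : Type*} [Group F] [IsFreeGroup F] {j : FreeGroup (Fin 2) →* F}
    {r : F →* F} (hj : Function.Injective j) (hr : ∀ x, r (r x) = r x) :
    IsRetract ((r.comp j).eqLocus j) := by
  by_cases hfix : ∀ a, r (j a) = j a
  · rw [(Subgroup.eq_top_iff' ((r.comp j).eqLocus j)).2 hfix]
    exact isRetract_top
  push Not at hfix
  obtain ⟨h, hh⟩ := hfix
  obtain ⟨c, hE⟩ := exists_eq_zpowers_of_forall_commute
    fun u hu v hv => commute_of_mem_eqLocus hj hr hh hu hv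
  rcases eq_or_ne c 1 with rfl | hc
  · rw [hE, Subgroup.zpowers_one_eq_bot]
    exact isRetract_bot
  have := isMulTorsionFree_of_isFreeGroup F
  have hcE : c ∈ (r.comp j).eqLocus j := hE.ge (Subgroup.mem_zpowers c)
  obtain ⟨τ, hτ⟩ := exists_monoidHom_int_eq_ofAdd_one fun p hp =>
    have := Fact.mk hp
    exists_character_ne_one_of_mem_eqLocus p hj hr hh hc hcE fun g =>
      mem_zpowers_of_commute_of_eqLocus_eq hc hE
  exact hE ▸ isRetract_zpowers hτ

theorem retract_inter_rank_two_general {F : Type*} [Group F] [IsFreeGroup F] (H R : Subgroup F)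
    (hH : HasFreeRank H 2) (hR : IsRetract R) : IsRetract ((H ⊓ R).subgroupOf H) := by
  obtain ⟨j, hj, rfl⟩ := hH
  obtain ⟨r, rfl, hrR⟩ := hR
  have hr : ∀ x, r (r x) = r x := fun x => hrR _ ⟨x, rfl⟩
  let e := MonoidHom.ofInjective hj
  convert (isRetract_eqLocus hj hr).map e
  ext x
  obtain ⟨a, rfl⟩ := e.surjective x
  constructor
  · rintro ⟨-, ha⟩
    exact ⟨a, hrR _ ha, rfl⟩
  · rintro ⟨b, hb, hba⟩
    obtain rfl := e.injective hba
    exact ⟨⟨b, rfl⟩, j b, hb⟩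

theorem retract_inter_rank_two {n : ℕ} (hn : 2 ≤ n)
    (H R : Subgroup (FreeGroup (Fin n))) (hH : HasFreeRank H 2) (hR : IsRetract R) :
    IsRetract ((H ⊓ R).subgroupOf H) :=
  retract_inter_rank_two_general H R hH hR
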